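/- arXiv:2507.15160 — 2 statements merged into one kernel-verified Lean document; each statement's English description precedes it below -/
import Mathlib

section
/- Let λ, x, y, z, w, t be complex numbers with |λ| < 1, |y| < |x|, and |w| < |z|. Then ∑_{n=0}^∞ (1/n!) · x^{n+1}/(x − λ^n y) · z^{n+1}/(z − λ^n w) · t^n = ∑_{k=0}^∞ ∑_{n=0}^∞ (w/z)^k (y/x)^n · exp(λ^{k+n} t x z), where exp is the complex exponential and the right-hand side is an absolutely convergent double series. -/
/-!
Expand `f v = ∑ aₘ vᵐ` inside the double series and exchange the order of summation. Since
`λ^((k + n) m) = (λᵐ)ᵏ (λᵐ)ⁿ`, the factor multiplying `aₘ (t x z)ᵐ` is then a product of two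
geometric series with ratios `λᵐ w / z` and `λᵐ y / x`, whose sums are the two Lambert factors.
-/

section PowerSeriesAverage

variable {ι 𝕜 : Type*} [NormedField 𝕜] {a : ℕ → 𝕜} {f : 𝕜 → 𝕜} {r : ℝ} {c v : ι → 𝕜}

theorem norm_mul_pow_le_of_norm_le {u : 𝕜} (hu : ‖u‖ ≤ r) (b : 𝕜) (n : ℕ) :
    ‖b * u ^ n‖ ≤ ‖b‖ * r ^ n := by
  rw [norm_mul, norm_pow]
  gcongr

theorem summable_norm_mul_apply_of_hasSum_pow (ha : Summable fun n ↦ ‖a n‖ * r ^ n)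
    (hc : Summable fun i ↦ ‖c i‖) (hv : ∀ i, ‖v i‖ ≤ r)
    (hf : ∀ i, HasSum (fun n ↦ a n * v i ^ n) (f (v i))) :
    Summable fun i ↦ ‖c i * f (v i)‖ := by
  refine .of_nonneg_of_le (fun _ ↦ norm_nonneg _) (fun i ↦ ?_)
    (hc.mul_right (∑' n, ‖a n‖ * r ^ n))
  rw [norm_mul]
  gcongr
  exact (hf i).norm_le_of_bounded ha.hasSum fun n ↦ norm_mul_pow_le_of_norm_le (hv i) (a n) n

theorem tsum_mul_apply_of_hasSum_pow [CompleteSpace 𝕜]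
    (ha : Summable fun n ↦ ‖a n‖ * r ^ n) (hc : Summable fun i ↦ ‖c i‖) (hv : ∀ i, ‖v i‖ ≤ r)
    (hf : ∀ i, HasSum (fun n ↦ a n * v i ^ n) (f (v i))) :
    ∑' i, c i * f (v i) = ∑' n, a n * ∑' i, c i * v i ^ n := by
  have hsum : Summable (Function.uncurry fun i n ↦ c i * (a n * v i ^ n)) := by
    refine .of_norm_bounded (summable_mul_of_summable_norm hc.norm ha.norm) fun ⟨i, n⟩ ↦ ?_
    simp only [Function.uncurry_apply_pair, norm_mul (c i)]
    gcongr
    exact norm_mul_pow_le_of_norm_le (hv i) (a n) n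
  calc ∑' i, c i * f (v i)
      = ∑' i, ∑' n, c i * (a n * v i ^ n) :=
        tsum_congr fun i ↦ ((hf i).mul_left (c i)).tsum_eq.symm
    _ = ∑' n, ∑' i, c i * (a n * v i ^ n) := hsum.tsum_comm.symm
    _ = ∑' n, a n * ∑' i, c i * v i ^ n := by
        simp only [mul_left_comm (c _), tsum_mul_left]

end PowerSeriesAverage

section DoubleGeometric

variable {𝕜 : Type*} [NormedField 𝕜] {α β l : 𝕜}

theorem summable_norm_pow_mul_pow (hα : ‖α‖ < 1) (hβ : ‖β‖ < 1) :
    Summable fun p : ℕ × ℕ ↦ ‖α ^ p.1 * β ^ p.2‖ :=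
  (summable_norm_geometric_of_norm_lt_one hα).mul_norm (summable_norm_geometric_of_norm_lt_one hβ)

theorem tsum_pow_mul_pow [CompleteSpace 𝕜] (hα : ‖α‖ < 1) (hβ : ‖β‖ < 1) :
    ∑' p : ℕ × ℕ, α ^ p.1 * β ^ p.2 = (1 - α)⁻¹ * (1 - β)⁻¹ := by
  rw [← tsum_mul_tsum_of_summable_norm (summable_norm_geometric_of_norm_lt_one hα)
    (summable_norm_geometric_of_norm_lt_one hβ), tsum_geometric_of_norm_lt_one hα,
    tsum_geometric_of_norm_lt_one hβ]

theorem norm_pow_mul_le_of_norm_le_one (hl : ‖l‖ ≤ 1) (m : ℕ) (u : 𝕜) : ‖l ^ m * u‖ ≤ ‖u‖ := by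
  rw [norm_mul, norm_pow]
  exact mul_le_of_le_one_left (norm_nonneg u) (pow_le_one₀ (norm_nonneg l) hl)

theorem tsum_pow_mul_pow_mul_pow_add [CompleteSpace 𝕜] (hl : ‖l‖ ≤ 1) (hα : ‖α‖ < 1)
    (hβ : ‖β‖ < 1) (u : 𝕜) (m : ℕ) :
    ∑' p : ℕ × ℕ, α ^ p.1 * β ^ p.2 * (l ^ (p.1 + p.2) * u) ^ m =
      u ^ m * ((1 - l ^ m * α)⁻¹ * (1 - l ^ m * β)⁻¹) := by
  rw [← tsum_pow_mul_pow ((norm_pow_mul_le_of_norm_le_one hl m α).trans_lt hα)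
    ((norm_pow_mul_le_of_norm_le_one hl m β).trans_lt hβ), ← tsum_mul_left]
  exact tsum_congr fun p ↦ by ring

end DoubleGeometric

theorem pow_succ_div_sub_mul {K : Type*} [Field K] {x : K} (hx : x ≠ 0) (q y : K) (n : ℕ) :
    x ^ (n + 1) / (x - q * y) = x ^ n * (1 - q * (y / x))⁻¹ := by
  have hfactor : x - q * y = (1 - q * (y / x)) * x := by field_simp
  rw [hfactor, pow_succ, mul_div_mul_right _ _ hx, div_eq_mul_inv]

theorem norm_div_lt_one {𝕜 : Type*} [NormedField 𝕜] {x y : 𝕜} (h : ‖y‖ < ‖x‖) : ‖y / x‖ < 1 := by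
  rw [norm_div]
  exact (div_lt_one ((norm_nonneg y).trans_lt h)).mpr h

theorem generalized_lambert_mehler_exp_general {𝕜 : Type*} [NormedField 𝕜] [CompleteSpace 𝕜]
    {a : ℕ → 𝕜} {f : 𝕜 → 𝕜} {l x y z w t : 𝕜}
    (hl : ‖l‖ ≤ 1) (hyx : ‖y‖ < ‖x‖) (hwz : ‖w‖ < ‖z‖)
    (ha : Summable fun n ↦ ‖a n‖ * ‖t * x * z‖ ^ n)
    (hf : ∀ v, ‖v‖ ≤ ‖t * x * z‖ → HasSum (fun n ↦ a n * v ^ n) (f v)) :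
    Summable (fun p : ℕ × ℕ ↦
      ‖(w / z) ^ p.1 * (y / x) ^ p.2 * f (l ^ (p.1 + p.2) * t * x * z)‖) ∧
    ∑' n : ℕ, a n * (x ^ (n + 1) / (x - l ^ n * y)) * (z ^ (n + 1) / (z - l ^ n * w)) * t ^ n
      = ∑' k : ℕ, ∑' n : ℕ, (w / z) ^ k * (y / x) ^ n * f (l ^ (k + n) * t * x * z) := by
  have hx : x ≠ 0 := norm_pos_iff.mp ((norm_nonneg y).trans_lt hyx)
  have hz : z ≠ 0 := norm_pos_iff.mp ((norm_nonneg w).trans_lt hwz)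
  have hα := norm_div_lt_one hwz
  have hβ := norm_div_lt_one hyx
  have hassoc (m : ℕ) : l ^ m * t * x * z = l ^ m * (t * x * z) := by ring
  simp only [hassoc]
  have hv (p : ℕ × ℕ) := norm_pow_mul_le_of_norm_le_one hl (p.1 + p.2) (t * x * z)
  have hc := summable_norm_pow_mul_pow hα hβ
  have hsum := summable_norm_mul_apply_of_hasSum_pow ha hc hv fun p ↦ hf _ (hv p)
  refine ⟨hsum, ?_⟩
  rw [← hsum.of_norm.tsum_prod,
    tsum_mul_apply_of_hasSum_pow ha hc hv fun p ↦ hf _ (hv p)]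
  refine tsum_congr fun m ↦ ?_
  rw [tsum_pow_mul_pow_mul_pow_add hl hα hβ, pow_succ_div_sub_mul hx, pow_succ_div_sub_mul hz]
  ring

theorem hasSum_one_div_factorial_mul_pow (u : ℂ) :
    HasSum (fun n : ℕ ↦ 1 / (n.factorial : ℂ) * u ^ n) (Complex.exp u) := by
  simpa only [Complex.exp_eq_exp_ℂ, one_div_mul_eq_div] using
    NormedSpace.expSeries_div_hasSum_exp u

theorem summable_norm_one_div_factorial_mul_pow (r : ℝ) :
    Summable fun n : ℕ ↦ ‖1 / (n.factorial : ℂ)‖ * r ^ n := by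
  simpa only [norm_div, norm_one, Complex.norm_natCast, one_div_mul_eq_div] using
    Real.summable_pow_div_factorial r

/-- Mehler-type generalized Lambert series for `aₙ = 1/n!`. -/
theorem generalized_lambert_mehler_exp (l x y z w t : ℂ)
    (hl : ‖l‖ < 1) (hyx : ‖y‖ < ‖x‖) (hwz : ‖w‖ < ‖z‖) :
    Summable (fun p : ℕ × ℕ =>
      ‖(w / z) ^ p.1 * (y / x) ^ p.2 * Complex.exp (l ^ (p.1 + p.2) * t * x * z)‖) ∧
    ∑' n : ℕ, (1 / (Nat.factorial n : ℂ)) * (x ^ (n + 1) / (x - l ^ n * y)) *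
        (z ^ (n + 1) / (z - l ^ n * w)) * t ^ n
      = ∑' k : ℕ, ∑' n : ℕ, (w / z) ^ k * (y / x) ^ n *
          Complex.exp (l ^ (k + n) * t * x * z) :=
  generalized_lambert_mehler_exp_general hl.le hyx hwz
    (summable_norm_one_div_factorial_mul_pow _) fun v _ ↦ hasSum_one_div_factorial_mul_pow v
end

section
/- Let λ, x, y, t, s be complex numbers with |λ| < 1 and |y| < |x|. With f(u) = ∑_{n=0}^∞ ((−1)^n/(2n)!) u^n (the entire function satisfying f(u²) = cos u), then ∑_{n=0}^∞ ∑_{m=0}^∞ ((−1)^{n+m}/((2n)!(2m)!)) · x^{n+m+1}/(x − λ^{n+m} y) · t^n s^m = ∑_{k=0}^∞ (y/x)^k · f(λ^k t x) · f(λ^k s x), where the left-hand side is an absolutely convergent double series. -/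
/-!
Since `‖l ^ (n + m) * (y / x)‖ < 1`, each denominator expands as a geometric series,
`x / (x - l ^ (n + m) * y) = ∑ₖ (y / x) ^ k * (l ^ k) ^ n * (l ^ k) ^ m`.
The resulting triple series is dominated by a product of three convergent series, so the sum over
`k` may be moved outside, and for fixed `k` the sum over `(n, m)` factors.
-/

section GeometricExpansion

variable {ι K : Type*} [NormedDivisionRing K] {c w : ι → K} {q : K}

theorem summable_norm_mul_geometric (hc : Summable fun i => ‖c i‖) (hw : ∀ i, ‖w i‖ ≤ 1)
    (hq : ‖q‖ < 1) : Summable fun p : ι × ℕ => ‖c p.1 * (w p.1 * q) ^ p.2‖ := by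
  have hgeom : Summable fun k : ℕ => ‖q‖ ^ k := summable_geometric_of_lt_one (norm_nonneg q) hq
  refine (hc.mul_of_nonneg hgeom (fun _ => norm_nonneg _) fun _ => by positivity).of_nonneg_of_le
    (fun _ => norm_nonneg _) ?_
  rintro ⟨i, k⟩
  have hwq : ‖w i‖ * ‖q‖ ≤ ‖q‖ := mul_le_of_le_one_left (norm_nonneg q) (hw i)
  simp only [norm_mul, norm_pow]
  gcongr

theorem hasSum_mul_geometric (a : K) {v : K} (hv : ‖v‖ ≤ 1) (hq : ‖q‖ < 1) :
    HasSum (fun k : ℕ => a * (v * q) ^ k) (a / (1 - v * q)) := by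
  have hvq : ‖v * q‖ < 1 := by
    rw [norm_mul]
    exact (mul_le_of_le_one_left (norm_nonneg q) hv).trans_lt hq
  simpa only [div_eq_mul_inv] using (hasSum_geometric_of_norm_lt_one hvq).mul_left a

theorem summable_norm_div_one_sub_mul (hc : Summable fun i => ‖c i‖) (hw : ∀ i, ‖w i‖ ≤ 1)
    (hq : ‖q‖ < 1) : Summable fun i => ‖c i / (1 - w i * q)‖ := by
  have hpair := summable_norm_mul_geometric hc hw hq
  refine hpair.prod.of_nonneg_of_le (fun _ => norm_nonneg _) fun i => ?_
  rw [← (hasSum_mul_geometric (c i) (hw i) hq).tsum_eq]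
  exact norm_tsum_le_tsum_norm (hpair.prod_factor i)

theorem tsum_div_one_sub_mul {𝕜 : Type*} [NormedField 𝕜] [CompleteSpace 𝕜] {c w : ι → 𝕜} {q : 𝕜}
    (hc : Summable fun i => ‖c i‖) (hw : ∀ i, ‖w i‖ ≤ 1) (hq : ‖q‖ < 1) :
    ∑' i, c i / (1 - w i * q) = ∑' k : ℕ, q ^ k * ∑' i, c i * w i ^ k := by
  have hpair := summable_norm_mul_geometric hc hw hq
  calc ∑' i, c i / (1 - w i * q)
      = ∑' i, ∑' k : ℕ, c i * (w i * q) ^ k :=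
        tsum_congr fun i => (hasSum_mul_geometric (c i) (hw i) hq).tsum_eq.symm
    _ = ∑' k : ℕ, ∑' i, c i * (w i * q) ^ k :=
        (Summable.tsum_comm (f := fun i k => c i * (w i * q) ^ k) hpair.of_norm).symm
    _ = ∑' k : ℕ, q ^ k * ∑' i, c i * w i ^ k := by
        refine tsum_congr fun k => ?_
        rw [← tsum_mul_left]
        exact tsum_congr fun i => by ring

end GeometricExpansion

section Dilation

theorem norm_pow_le_one {R : Type*} [SeminormedRing R] [NormOneClass R] {r : R} (hr : ‖r‖ ≤ 1)
    (n : ℕ) : ‖r ^ n‖ ≤ 1 :=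
  (norm_pow_le r n).trans (pow_le_one₀ (norm_nonneg r) hr)

theorem summable_norm_mul_mul_pow {K : Type*} [NormedDivisionRing K] {a : ℕ → K} {r u : K}
    (hr : ‖r‖ ≤ 1) (hu : Summable fun n => ‖a n * u ^ n‖) :
    Summable fun n => ‖a n * (r * u) ^ n‖ := by
  refine hu.of_nonneg_of_le (fun _ => norm_nonneg _) fun n => ?_
  have hru : ‖r‖ * ‖u‖ ≤ ‖u‖ := mul_le_of_le_one_left (norm_nonneg u) hr
  simp only [norm_mul, norm_pow]
  gcongr

theorem tsum_mul_tsum_mul_pow {𝕜 : Type*} [NormedField 𝕜] [CompleteSpace 𝕜] {a b : ℕ → 𝕜}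
    {r u v : 𝕜} (hr : ‖r‖ ≤ 1) (hu : Summable fun n => ‖a n * u ^ n‖)
    (hv : Summable fun n => ‖b n * v ^ n‖) :
    (∑' n, a n * (r * u) ^ n) * ∑' n, b n * (r * v) ^ n =
      ∑' p : ℕ × ℕ, a p.1 * u ^ p.1 * (b p.2 * v ^ p.2) * r ^ (p.1 + p.2) := by
  have hru : Summable fun n => ‖a n * (r * u) ^ n‖ := summable_norm_mul_mul_pow hr hu
  have hrv : Summable fun n => ‖b n * (r * v) ^ n‖ := summable_norm_mul_mul_pow hr hv
  rw [tsum_mul_tsum_of_summable_norm hru hrv]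
  exact tsum_congr fun p => by ring

end Dilation

section LambertRogers

variable {𝕜 : Type*} [NormedField 𝕜] {a b : ℕ → 𝕜} {l x y t s : 𝕜}

/-- The `(n, m)`-th term of the generalized Lambert–Rogers series with coefficient sequences `a`
and `b`, at `p = (n, m)`. -/
def lambertRogersTerm (a b : ℕ → 𝕜) (l x y t s : 𝕜) (p : ℕ × ℕ) : 𝕜 :=
  a p.1 * b p.2 * (x ^ (p.1 + p.2 + 1) / (x - l ^ (p.1 + p.2) * y)) * t ^ p.1 * s ^ p.2

theorem lambertRogersTerm_eq_div_one_sub (hx : x ≠ 0) (p : ℕ × ℕ) :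
    lambertRogersTerm a b l x y t s p =
      a p.1 * (t * x) ^ p.1 * (b p.2 * (s * x) ^ p.2) / (1 - l ^ (p.1 + p.2) * (y / x)) := by
  have hdenom : x - l ^ (p.1 + p.2) * y = x * (1 - l ^ (p.1 + p.2) * (y / x)) := by
    field_simp
  rw [lambertRogersTerm, hdenom, pow_succ', mul_div_mul_left _ _ hx]
  ring

theorem summable_norm_lambertRogersTerm (hl : ‖l‖ ≤ 1) (hyx : ‖y‖ < ‖x‖)
    (ha : Summable fun n => ‖a n * (t * x) ^ n‖) (hb : Summable fun n => ‖b n * (s * x) ^ n‖) :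
    Summable fun p => ‖lambertRogersTerm a b l x y t s p‖ := by
  have hx : 0 < ‖x‖ := (norm_nonneg y).trans_lt hyx
  have hq : ‖y / x‖ < 1 := by rwa [norm_div, div_lt_one hx]
  have hw (p : ℕ × ℕ) : ‖l ^ (p.1 + p.2)‖ ≤ 1 := norm_pow_le_one hl _
  simpa only [lambertRogersTerm_eq_div_one_sub (norm_pos_iff.mp hx)] using
    summable_norm_div_one_sub_mul (ha.mul_norm hb) hw hq

theorem tsum_lambertRogersTerm [CompleteSpace 𝕜] (hl : ‖l‖ ≤ 1) (hyx : ‖y‖ < ‖x‖)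
    (ha : Summable fun n => ‖a n * (t * x) ^ n‖) (hb : Summable fun n => ‖b n * (s * x) ^ n‖) :
    ∑' p, lambertRogersTerm a b l x y t s p =
      ∑' k : ℕ, (y / x) ^ k * (∑' j, a j * (l ^ k * t * x) ^ j) *
        ∑' j, b j * (l ^ k * s * x) ^ j := by
  have hx : 0 < ‖x‖ := (norm_nonneg y).trans_lt hyx
  have hq : ‖y / x‖ < 1 := by rwa [norm_div, div_lt_one hx]
  have hw (p : ℕ × ℕ) : ‖l ^ (p.1 + p.2)‖ ≤ 1 := norm_pow_le_one hl _
  simp only [lambertRogersTerm_eq_div_one_sub (norm_pos_iff.mp hx)]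
  rw [tsum_div_one_sub_mul (ha.mul_norm hb) hw hq]
  refine tsum_congr fun k => ?_
  simp only [mul_assoc (l ^ k), pow_right_comm l _ k]
  rw [mul_assoc, tsum_mul_tsum_mul_pow (norm_pow_le_one hl k) ha hb]

end LambertRogers

section CosSqrt

variable {𝕜 : Type*} [RCLike 𝕜]

/-- The Taylor coefficients of the entire function `f` with `f (u ^ 2) = cos u`. -/
def cosSqrtCoeff (𝕜 : Type*) [RCLike 𝕜] (n : ℕ) : 𝕜 :=
  (-1) ^ n / (Nat.factorial (2 * n) : 𝕜)

theorem summable_norm_cosSqrtCoeff_mul_pow (u : 𝕜) :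
    Summable fun n => ‖cosSqrtCoeff 𝕜 n * u ^ n‖ := by
  refine (Real.summable_pow_div_factorial ‖u‖).of_nonneg_of_le (fun _ => norm_nonneg _) fun n => ?_
  calc ‖cosSqrtCoeff 𝕜 n * u ^ n‖ = ‖u‖ ^ n / (Nat.factorial (2 * n) : ℝ) := by
        simp only [cosSqrtCoeff, norm_mul, norm_div, norm_pow, norm_neg, norm_one, one_pow,
          RCLike.norm_natCast]
        ring
    _ ≤ ‖u‖ ^ n / (Nat.factorial n : ℝ) := by
        gcongr
        omega

theorem lambertRogersTerm_cosSqrtCoeff (l x y t s : 𝕜) (p : ℕ × ℕ) :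
    lambertRogersTerm (cosSqrtCoeff 𝕜) (cosSqrtCoeff 𝕜) l x y t s p =
      ((-1 : 𝕜) ^ (p.1 + p.2) /
          ((Nat.factorial (2 * p.1) : 𝕜) * (Nat.factorial (2 * p.2) : 𝕜))) *
        (x ^ (p.1 + p.2 + 1) / (x - l ^ (p.1 + p.2) * y)) * t ^ p.1 * s ^ p.2 := by
  rw [lambertRogersTerm, cosSqrtCoeff, cosSqrtCoeff, div_mul_div_comm, ← pow_add]

theorem generalized_lambert_rogers_cos_general (l x y t s : 𝕜)
    (hl : ‖l‖ ≤ 1) (hyx : ‖y‖ < ‖x‖) :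
    Summable (fun p : ℕ × ℕ =>
      ‖((-1 : 𝕜) ^ (p.1 + p.2) /
          ((Nat.factorial (2 * p.1) : 𝕜) * (Nat.factorial (2 * p.2) : 𝕜))) *
        (x ^ (p.1 + p.2 + 1) / (x - l ^ (p.1 + p.2) * y)) * t ^ p.1 * s ^ p.2‖) ∧
    ∑' n : ℕ, ∑' m : ℕ, ((-1 : 𝕜) ^ (n + m) /
          ((Nat.factorial (2 * n) : 𝕜) * (Nat.factorial (2 * m) : 𝕜))) *
        (x ^ (n + m + 1) / (x - l ^ (n + m) * y)) * t ^ n * s ^ m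
      = ∑' k : ℕ, (y / x) ^ k *
          (∑' j : ℕ, ((-1 : 𝕜) ^ j / (Nat.factorial (2 * j) : 𝕜)) * (l ^ k * t * x) ^ j) *
          (∑' j : ℕ, ((-1 : 𝕜) ^ j / (Nat.factorial (2 * j) : 𝕜)) * (l ^ k * s * x) ^ j) := by
  have ht := summable_norm_cosSqrtCoeff_mul_pow (t * x)
  have hs := summable_norm_cosSqrtCoeff_mul_pow (s * x)
  have hsum := summable_norm_lambertRogersTerm hl hyx ht hs
  have htsum := tsum_lambertRogersTerm hl hyx ht hs
  rw [hsum.of_norm.tsum_prod] at htsum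
  simp only [lambertRogersTerm_cosSqrtCoeff] at hsum htsum
  exact ⟨hsum, htsum⟩

end CosSqrt

/-- Rogers-type generalized Lambert series for `aₙ = (−1)ⁿ/(2n)!`, `bₘ = (−1)ᵐ/(2m)!`,
with generating function `f(u) = ∑ⱼ ((−1)ʲ/(2j)!) uʲ` (so that `f(u²) = cos u`). -/
theorem generalized_lambert_rogers_cos (l x y t s : ℂ)
    (hl : ‖l‖ < 1) (hyx : ‖y‖ < ‖x‖) :
    Summable (fun p : ℕ × ℕ =>
      ‖((-1 : ℂ) ^ (p.1 + p.2) /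
          ((Nat.factorial (2 * p.1) : ℂ) * (Nat.factorial (2 * p.2) : ℂ))) *
        (x ^ (p.1 + p.2 + 1) / (x - l ^ (p.1 + p.2) * y)) * t ^ p.1 * s ^ p.2‖) ∧
    ∑' n : ℕ, ∑' m : ℕ, ((-1 : ℂ) ^ (n + m) /
          ((Nat.factorial (2 * n) : ℂ) * (Nat.factorial (2 * m) : ℂ))) *
        (x ^ (n + m + 1) / (x - l ^ (n + m) * y)) * t ^ n * s ^ m
      = ∑' k : ℕ, (y / x) ^ k *
          (∑' j : ℕ, ((-1 : ℂ) ^ j / (Nat.factorial (2 * j) : ℂ)) * (l ^ k * t * x) ^ j) *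
          (∑' j : ℕ, ((-1 : ℂ) ^ j / (Nat.factorial (2 * j) : ℂ)) * (l ^ k * s * x) ^ j) :=
  generalized_lambert_rogers_cos_general l x y t s hl.le hyx
end
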